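/- Corollary 1 (BPC-HO): Let K, L be positive integers. Suppose n workers have derivative sets U_1, …, U_n ⊆ {0,…,K−1}×{0,…,L−1}, each horizontally ordered (i.e., Z-zig-zag ordered with parameter μ_A = K, so downward closed with respect to the score S_H(k, l) = K(l−1) + k on 1-indexed pairs), with Σ_i |U_i| = KL. Then the KL×KL interpolation matrix M built from the nodes z_i = (x_i, y_i) with derivative sets U_i satisfies det(M) ≠ 0 for almost all choices of the evaluation points (x_1, y_1, …, x_n, y_n) ∈ (ℝ²)^n (the exceptional set has Lebesgue measure zero). In other words, any KL computations received by the master under the horizontal computation order suffice for decoding almost surely. -/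

import Mathlib

/-!
The determinant `det M` is a polynomial in the coordinates of the nodes, so it suffices to find one
configuration of nodes at which it does not vanish: a function on a finite-dimensional real space
that is continuous, polynomial along every line and nonzero somewhere has a null zero set
(`null_of_polynomial_on_lines`).

Write `score (k, l) = K·l + k`. The nodes are taken on the curve `(x_i, y_i) = (t^i, t^(iK))`. After
multiplying the row of order `d` of worker `i` by `t^(i · score d)`, its entry in column `c = (k, l)`
becomes `(k)_{d_x} (l)_{d_y} t^(i · score c)` (falling factorials). In the Leibniz expansion of this
determinant in `t`, the equality case of the rearrangement inequality shows that the terms of top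
degree are the ones that assign columns to workers monotonically in the score: worker `i` receives
the window of the `|U_i|` consecutive scores starting at `|U_1| + … + |U_{i-1}|`. Hence the top
coefficient is the determinant of a block matrix (`coeff_det_eq_det_block`), the block of worker `i`
consisting of the values of `(k)_{d_x} (l)_{d_y}`, `d ∈ U_i`, at the points `(k, l)` of its window.

Each block is nonsingular (`block_unisolvent`). A horizontally ordered set of size `m = Kq + r` is
`{d | score d < m}`, so a combination of its rows is `∑_{b ≤ q} A_b(k) (l)_b`, where each `A_b` is a
polynomial in `k` of degree less than `K`, and `A_q` has degree less than `r`. Suppose it vanishes on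
`m` consecutive scores. For `r` values of `k` there are `q + 1` points of the window with first
coordinate `k`, so `A_q(k) = 0` at `r` values and `A_q = 0`. For every `k < K` there are at least `q`
such points, so all the remaining `A_b(k)` vanish for `k < K`, and `A_b = 0`.
-/


open MeasureTheory

noncomputable section

/-- Entry of the Hermite row of order `(dx, dy)` at the node `(x, y)`, in the column indexed
by the monomial exponents `(k, l)`:
`(∂^{dx+dy}/∂x^{dx}∂y^{dy})(x^k y^l)` evaluated at `(x, y)`. -/
def hEntry (dx dy k l : ℕ) (x y : ℝ) : ℝ :=
  if dx ≤ k ∧ dy ≤ l then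
    (Nat.descFactorial k dx : ℝ) * (Nat.descFactorial l dy : ℝ) * x ^ (k - dx) * y ^ (l - dy)
  else 0

/-- A derivative set `U ⊆ {0,…,K−1}×{0,…,L−1}` is horizontally ordered (row-by-row filling
of the derivative order space): `(i, j) ∈ U` implies every `(k, l)` with
`K·l + k ≤ K·j + i` lies in `U`. -/
def HorizontallyOrdered (K L : ℕ) (U : Finset (Fin K × Fin L)) : Prop :=
  ∀ d ∈ U, ∀ d' : Fin K × Fin L,
    K * (d'.2 : ℕ) + (d'.1 : ℕ) ≤ K * (d.2 : ℕ) + (d.1 : ℕ) → d' ∈ U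

/-- The `KL × KL` interpolation matrix built from the nodes `z i` with derivative sets `U i`,
where the bijection `e` enumerates the rows: the row corresponding to the derivative order
`d ∈ U i` is the Hermite row of order `d` at the node `z i`. -/
def interpMatrix (K L n : ℕ) (U : Fin n → Finset (Fin K × Fin L))
    (e : (Σ i : Fin n, {d : Fin K × Fin L // d ∈ U i}) ≃ (Fin K × Fin L))
    (z : Fin n → ℝ × ℝ) : Matrix (Fin K × Fin L) (Fin K × Fin L) ℝ :=
  Matrix.of fun r c =>
    hEntry (((e.symm r).2.1.1 : ℕ)) (((e.symm r).2.1.2 : ℕ)) ((c.1 : ℕ)) ((c.2 : ℕ))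
      (z (e.symm r).1).1 (z (e.symm r).1).2

/-! ### Unisolvence of falling factorials -/

/-- A combination of the first `q` falling factorials that vanishes at `q` distinct naturals has
zero coefficients: it is a polynomial of degree less than `q`, and the falling factorials form a
triangular system at `0, 1, …, q - 1`. -/
lemma descFactorial_unisolvent (q : ℕ) (x : ℕ → ℕ)
    (hx : ∀ i < q, ∀ j < q, x i = x j → i = j) (a : ℕ → ℝ)
    (h : ∀ i < q, ∑ j ∈ Finset.range q, a j * ((x i).descFactorial j : ℝ) = 0) :
    ∀ j < q, a j = 0 := by
  set p : Polynomial ℝ := ∑ j ∈ Finset.range q, Polynomial.C (a j) * descPochhammer ℝ j with hp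
  have heval : ∀ l : ℕ, p.eval (l : ℝ) =
      ∑ j ∈ Finset.range q, a j * (l.descFactorial j : ℝ) := by
    intro l
    simp [hp, Polynomial.eval_finsetSum, descPochhammer_eval_eq_descFactorial]
  have hp0 : p = 0 := by
    rcases Nat.eq_zero_or_pos q with rfl | hq
    · simp [hp]
    refine Polynomial.eq_zero_of_natDegree_lt_card_of_eval_eq_zero p
      (f := fun i : Fin q => ((x i : ℕ) : ℝ)) ?_ ?_ ?_
    · intro i j hij
      exact Fin.ext (hx i i.2 j j.2 (Nat.cast_injective (R := ℝ) hij))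
    · intro i
      rw [heval]
      exact h i i.2
    · rw [Fintype.card_fin]
      refine lt_of_le_of_lt (Polynomial.natDegree_sum_le_of_forall_le (n := q - 1) _ _ ?_) (by omega)
      intro j hj
      refine (Polynomial.natDegree_C_mul_le _ _).trans ?_
      rw [descPochhammer_natDegree]
      have := Finset.mem_range.1 hj
      omega
  intro j
  induction j using Nat.strong_induction_on with
  | _ j ih =>
    intro hj
    have h1 := heval j
    rw [hp0, Polynomial.eval_zero, Finset.sum_eq_single j] at h1
    · have : (j.descFactorial j : ℝ) ≠ 0 := by
        rw [Nat.descFactorial_self]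
        exact_mod_cast j.factorial_ne_zero
      exact (mul_eq_zero.1 h1.symm).resolve_right this
    · intro b hb hbj
      rcases lt_or_gt_of_ne hbj with h2 | h2
      · rw [ih b h2 (h2.trans hj), zero_mul]
      · rw [Nat.descFactorial_eq_zero_iff_lt.2 h2]
        simp
    · intro h2
      exact absurd (Finset.mem_range.2 hj) h2

/-- Nonsingularity of the block of one worker: the products of falling factorials indexed by the
first `m` scores are unisolvent on any window `o ≤ K * l + k < o + m` of `m` consecutive scores. -/
lemma block_unisolvent (K L m o : ℕ) (hK : 0 < K) (hm : m ≤ K * L) (v : ℕ → ℕ → ℝ)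
    (hv : ∀ a b, m ≤ K * b + a → v a b = 0)
    (h : ∀ k < K, ∀ l, o ≤ K * l + k → K * l + k < o + m →
      ∑ b ∈ Finset.range L, (∑ a ∈ Finset.range K, v a b * (k.descFactorial a : ℝ)) *
        (l.descFactorial b : ℝ) = 0) :
    ∀ a < K, ∀ b, v a b = 0 := by
  set q := m / K with hq
  set r := m % K with hr
  have hmq : K * q + r = m := Nat.div_add_mod m K
  have hrK : r < K := Nat.mod_lt _ hK
  set A : ℕ → ℕ → ℝ := fun b k => ∑ a ∈ Finset.range K, v a b * (k.descFactorial a : ℝ) with hA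
  have hAz : ∀ b k, m ≤ K * b → A b k = 0 := by
    intro b k hb
    refine Finset.sum_eq_zero fun a _ => ?_
    rw [hv a b (by omega), zero_mul]
  -- the terms with `m ≤ K * b` vanish, so the range of summation may be any `N` with `m ≤ K * N`
  have h' : ∀ N, m ≤ K * N → ∀ k < K, ∀ l, o ≤ K * l + k → K * l + k < o + m →
      ∑ b ∈ Finset.range N, A b k * (l.descFactorial b : ℝ) = 0 := by
    intro N hN k hk l h1 h2
    rw [← h k hk l h1 h2]
    have key : ∀ N, m ≤ K * N → ∑ b ∈ Finset.range N, A b k * (l.descFactorial b : ℝ) =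
        ∑ b ∈ Finset.range (N + L), A b k * (l.descFactorial b : ℝ) := by
      intro N hN
      refine Finset.sum_subset (Finset.range_mono (by omega)) fun b _ hb => ?_
      have : N ≤ b := by simpa using hb
      rw [hAz b k (hN.trans (Nat.mul_le_mul_left K this)), zero_mul]
    have key2 : ∑ b ∈ Finset.range L, A b k * (l.descFactorial b : ℝ) =
        ∑ b ∈ Finset.range (N + L), A b k * (l.descFactorial b : ℝ) := by
      refine Finset.sum_subset (Finset.range_mono (by omega)) fun b _ hb => ?_
      have : L ≤ b := by simpa using hb
      rw [hAz b k (hm.trans (Nat.mul_le_mul_left K this)), zero_mul]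
    rw [key N hN, ← key2]
  have hinj : ∀ i < K, ∀ j < K, (o + i) % K = (o + j) % K → i = j := by
    intro i hi j hj hij
    exact Nat.ModEq.eq_of_lt_of_lt (Nat.ModEq.add_left_cancel' o hij) hi hj
  have hpt : ∀ j t, K * ((o + j) / K + t) + (o + j) % K = o + j + K * t := by
    intro j t
    have := Nat.div_add_mod (o + j) K
    rw [Nat.mul_add]
    omega
  -- the residues `k = (o + j) % K` with `j < r` are those with `q + 1` points in the window
  have hq1 : ∀ j < r, A q ((o + j) % K) = 0 := by
    intro j hj
    refine descFactorial_unisolvent (q + 1) (fun t => (o + j) / K + t)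
      (fun i _ j _ hij => by simpa using hij) (fun b => A b ((o + j) % K)) ?_ q (by omega)
    intro t ht
    have h3 : K * t ≤ K * q := Nat.mul_le_mul_left K (by omega)
    refine h' (q + 1) (by rw [Nat.mul_add]; omega) _ (Nat.mod_lt _ hK) _ ?_ ?_
    · rw [hpt]; omega
    · rw [hpt]; omega
  have hvq : ∀ a, v a q = 0 := by
    intro a
    by_cases har : a < r
    · refine descFactorial_unisolvent r (fun j => (o + j) % K)
        (fun i hi j hj hij => hinj i (by omega) j (by omega) hij) (fun a => v a q) ?_ a har
      intro j hj
      rw [← hq1 j hj]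
      refine Finset.sum_subset (Finset.range_mono hrK.le) fun b _ hb => ?_
      have : r ≤ b := by simpa using hb
      rw [hv b q (by omega), zero_mul]
    · exact hv a q (by omega)
  have hlow : ∀ j < K, ∀ b < q, A b ((o + j) % K) = 0 := by
    intro j hj
    refine descFactorial_unisolvent q (fun t => (o + j) / K + t)
      (fun i _ j _ hij => by simpa using hij) (fun b => A b ((o + j) % K)) ?_
    intro t ht
    have h3 : K * (t + 1) ≤ K * q := Nat.mul_le_mul_left K (by omega)
    rw [Nat.mul_add] at h3
    have h4 := h' (q + 1) (by rw [Nat.mul_add]; omega) ((o + j) % K) (Nat.mod_lt _ hK)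
      ((o + j) / K + t) (by rw [hpt]; omega) (by rw [hpt]; omega)
    rw [Finset.sum_range_succ] at h4
    have h5 : A q ((o + j) % K) = 0 := Finset.sum_eq_zero fun a _ => by rw [hvq, zero_mul]
    rw [h5, zero_mul, add_zero] at h4
    exact h4
  intro a ha b
  rcases lt_trichotomy b q with hb | rfl | hb
  · exact descFactorial_unisolvent K (fun j => (o + j) % K) hinj (fun a => v a b)
      (fun j hj => hlow j hj b hb) a ha
  · exact hvq a
  · have h3 : K * (q + 1) ≤ K * b := Nat.mul_le_mul_left K hb
    rw [Nat.mul_add] at h3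
    exact hv a b (by omega)

/-! ### Zero sets of functions that are polynomial on lines -/

/-- Let `f` be nonzero at `z₀`. On each line through `z₀` the zeros are finite in number, so by
Fubini almost every dilation about `z₀` pulls the zero set back to a null set; since a nonzero
dilation scales the Haar measure by a nonzero factor, the zero set itself is null. -/
lemma null_of_polynomial_on_lines {E : Type*} [NormedAddCommGroup E] [NormedSpace ℝ E]
    [FiniteDimensional ℝ E] [MeasurableSpace E] [BorelSpace E] (μ : Measure E)
    [μ.IsAddHaarMeasure] (f : E → ℝ) (hf : Continuous f)
    (hpoly : ∀ a v : E, ∃ p : Polynomial ℝ, ∀ t : ℝ, f (a + t • v) = p.eval t)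
    (z₀ : E) (hz₀ : f z₀ ≠ 0) : μ {z | f z = 0} = 0 := by
  have hmeas : MeasurableSet {x : E × ℝ | f (z₀ + x.2 • x.1) ≠ 0} :=
    (isOpen_ne_fun (by fun_prop) continuous_const).measurableSet
  have h1 : ∀ᵐ v ∂μ, ∀ᵐ t : ℝ, f (z₀ + t • v) ≠ 0 := by
    refine Filter.Eventually.of_forall fun v => ?_
    obtain ⟨p, hp⟩ := hpoly z₀ v
    have hp0 : p ≠ 0 := by
      rintro rfl
      exact hz₀ (by simpa using hp 0)
    have hfin : {t : ℝ | ¬ f (z₀ + t • v) ≠ 0}.Finite := by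
      refine (Polynomial.finite_setOfPred_isRoot hp0).subset fun t ht => ?_
      have h2 : f (z₀ + t • v) = 0 := not_not.1 ht
      rw [hp] at h2
      exact h2
    exact hfin.measure_zero _
  have h2 := (Measure.ae_ae_comm (μ := μ) (ν := (volume : Measure ℝ))
    (p := fun v t => f (z₀ + t • v) ≠ 0) hmeas).1 h1
  have h3 : ∀ᵐ t : ℝ, t ≠ 0 := Measure.ae_ne volume 0
  obtain ⟨t, ht, ht0⟩ := (h2.and h3).exists
  have h4 : μ ((fun v => t • v) ⁻¹' {v | f (z₀ + v) = 0}) = 0 := by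
    have := ae_iff.1 ht
    simpa using this
  rw [Measure.addHaar_preimage_smul μ ht0] at h4
  have h5 : μ {v | f (z₀ + v) = 0} = 0 := by
    refine (mul_eq_zero.1 h4).resolve_left ?_
    simp [ht0]
  have h6 := measure_preimage_add μ z₀ {z | f z = 0}
  rw [← h6]
  exact h5

/-! ### The top coefficient of the determinant along the curve -/

/-- A weight `w` that is monotone in the injective score `s` is determined by its multiset of
values: a rearrangement `w ∘ σ` that is again monotone coincides with `w`. -/
lemma perm_eq_of_monovary {ι : Type*} [Fintype ι] [DecidableEq ι] (w s : ι → ℕ)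
    (hs : Function.Injective s) (hws : Monovary w s) (σ : Equiv.Perm ι)
    (hσ : Monovary (w ∘ σ) s) : ∀ x, w (σ x) = w x := by
  have hle : ∀ x, w x ≤ w (σ x) := by
    intro x
    by_contra! hx
    have hsub : Finset.univ.filter (fun c => w x ≤ w (σ c)) ⊂
        Finset.univ.filter (fun c => w x ≤ w c) := by
      refine (Finset.ssubset_iff_of_subset ?_).2 ⟨x, by simp, by simpa using hx⟩
      intro c hc
      simp only [Finset.mem_filter, Finset.mem_univ, true_and] at hc ⊢
      rcases lt_trichotomy (s x) (s c) with h | h | h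
      · exact hws h
      · rw [hs h]
      · have : w (σ c) ≤ w (σ x) := hσ h
        omega
    have hcard := Finset.card_lt_card hsub
    have heq : (Finset.univ.filter (fun c => w x ≤ w (σ c))).card =
        (Finset.univ.filter (fun c => w x ≤ w c)).card :=
      Finset.card_equiv σ (by simp)
    omega
  have := (Finset.sum_eq_sum_iff_of_le (s := Finset.univ) (f := w) (g := fun x => w (σ x))
    (fun x _ => hle x)).1 (Equiv.sum_comp σ w).symm
  exact fun x => (this x (Finset.mem_univ x)).symm

/-- By the equality case of the rearrangement inequality, a permutation contributes to the
coefficient of degree `∑ i, w i * s i` exactly when it preserves `w`. -/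
lemma coeff_det_eq_det_block {ι : Type*} [Fintype ι] [DecidableEq ι] (w s : ι → ℕ)
    (hs : Function.Injective s) (hws : Monovary w s) (c : ι → ι → ℝ) :
    (Matrix.det (Matrix.of fun i j => Polynomial.C (c i j) * Polynomial.X ^ (w i * s j))).coeff
      (∑ i, w i * s i) = Matrix.det (Matrix.of fun i j => if w i = w j then c i j else 0) := by
  rw [Matrix.det_apply, Matrix.det_apply, Polynomial.finsetSum_coeff]
  refine Finset.sum_congr rfl fun σ _ => ?_
  rw [Polynomial.coeff_smul]
  congr 1
  simp only [Matrix.of_apply]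
  rw [Finset.prod_mul_distrib, Finset.prod_pow_eq_pow_sum, ← map_prod,
    Polynomial.coeff_C_mul_X_pow, Finset.prod_ite_zero]
  have hiff : (∑ i, w i * s i = ∑ i, w (σ i) * s i) ↔ ∀ i ∈ Finset.univ, w (σ i) = w i := by
    rw [eq_comm, hws.sum_comp_perm_mul_eq_sum_mul_iff]
    constructor
    · exact fun h i _ => perm_eq_of_monovary w s hs hws σ h i
    · intro h
      have : w ∘ σ = w := funext fun i => h i (Finset.mem_univ i)
      rwa [this]
  by_cases h : ∑ i, w i * s i = ∑ i, w (σ i) * s i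
  · rw [if_pos h, if_pos (hiff.1 h)]
  · rw [if_neg h, if_neg (fun hall => h (hiff.2 hall))]

/-! ### The horizontal order and the enumeration of the rows -/

lemma mem_iff_lt_card_of_downClosed (T : Finset ℕ) (hT : ∀ t ∈ T, ∀ s < t, s ∈ T) (t : ℕ) :
    t ∈ T ↔ t < T.card := by
  constructor
  · intro ht
    have : Finset.range (t + 1) ⊆ T := fun s hs => by
      rcases Nat.lt_succ_iff_lt_or_eq.1 (Finset.mem_range.1 hs) with h | rfl
      · exact hT t ht s h
      · exact ht
    simpa using Finset.card_le_card this
  · intro ht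
    by_contra hn
    have : T ⊆ Finset.range t := fun s hs => by
      rw [Finset.mem_range]
      by_contra! hle
      rcases hle.eq_or_lt with rfl | hlt
      · exact hn hs
      · exact hn (hT s hs t hlt)
    have := Finset.card_le_card this
    rw [Finset.card_range] at this
    omega

/-- The position `K·l + k` of a pair `(k, l)` in the horizontal order (0-indexed). -/
def score {K L : ℕ} (d : Fin K × Fin L) : ℕ := K * (d.2 : ℕ) + (d.1 : ℕ)

lemma score_injective {K L : ℕ} : Function.Injective (score : Fin K × Fin L → ℕ) := by
  intro c d h
  have hK : 0 < K := Nat.zero_lt_of_lt c.1.2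
  unfold score at h
  have h1 : (c.1 : ℕ) = d.1 := by
    have := congrArg (· % K) h
    simpa [Nat.mul_add_mod, Nat.mod_eq_of_lt] using this
  have h2 : (c.2 : ℕ) = d.2 := by
    rw [h1] at h
    exact Nat.eq_of_mul_eq_mul_left hK (Nat.add_right_cancel h)
  exact Prod.ext (Fin.ext h1) (Fin.ext h2)

lemma score_lt {K L : ℕ} (d : Fin K × Fin L) : score d < K * L := by
  have h : K * ((d.2 : ℕ) + 1) ≤ K * L := Nat.mul_le_mul_left K d.2.2
  have := d.1.2
  rw [Nat.mul_add] at h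
  unfold score
  omega

lemma exists_score_eq {K L t : ℕ} (ht : t < K * L) : ∃ d : Fin K × Fin L, score d = t := by
  have hK : 0 < K := by
    rcases Nat.eq_zero_or_pos K with rfl | h
    · simp at ht
    · exact h
  exact ⟨(⟨t % K, Nat.mod_lt _ hK⟩, ⟨t / K, Nat.div_lt_of_lt_mul ht⟩), Nat.div_add_mod t K⟩

/-- A horizontally ordered set is the set of pairs of the first `U.card` scores. -/
lemma HorizontallyOrdered.mem_iff {K L : ℕ} {U : Finset (Fin K × Fin L)}
    (hU : HorizontallyOrdered K L U) (d : Fin K × Fin L) : d ∈ U ↔ score d < U.card := by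
  classical
  rw [← Finset.card_image_of_injective U score_injective, ← mem_iff_lt_card_of_downClosed]
  · rw [Finset.mem_image]
    constructor
    · exact fun h => ⟨d, h, rfl⟩
    · rintro ⟨d', h, h'⟩
      rwa [← score_injective h']
  · intro t ht s hst
    obtain ⟨d, hd, rfl⟩ := Finset.mem_image.1 ht
    obtain ⟨d', rfl⟩ := exists_score_eq (hst.trans (score_lt d))
    exact Finset.mem_image_of_mem _ (hU d hd d' hst.le)

/-- The number of rows contributed by the workers preceding worker `i`. -/
def offset {K L n : ℕ} (U : Fin n → Finset (Fin K × Fin L)) (i : Fin n) : ℕ :=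
  ∑ j ∈ Finset.Iio i, (U j).card

lemma offset_add_card_le {K L n : ℕ} (U : Fin n → Finset (Fin K × Fin L)) {i j : Fin n}
    (hij : i < j) : offset U i + (U i).card ≤ offset U j := by
  unfold offset
  rw [add_comm, ← Finset.sum_insert (f := fun k => (U k).card) (by simp)]
  refine Finset.sum_le_sum_of_subset fun k hk => ?_
  simp only [Finset.mem_insert, Finset.mem_Iio] at hk ⊢
  rcases hk with rfl | hk
  · exact hij
  · exact hk.trans hij

lemma offset_add_card_le_sum {K L n : ℕ} (U : Fin n → Finset (Fin K × Fin L)) (i : Fin n) :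
    offset U i + (U i).card ≤ ∑ j, (U j).card := by
  unfold offset
  rw [add_comm, ← Finset.sum_insert (f := fun k => (U k).card) (by simp)]
  exact Finset.sum_le_sum_of_subset (Finset.subset_univ _)

/-- The rows, listed worker by worker and by increasing score within each worker, are matched with
the columns in order of increasing score. -/
lemma exists_row_equiv {K L n : ℕ} (U : Fin n → Finset (Fin K × Fin L))
    (hord : ∀ i, HorizontallyOrdered K L (U i)) (hsum : ∑ i, (U i).card = K * L) :
    ∃ e : (Σ i : Fin n, {d : Fin K × Fin L // d ∈ U i}) ≃ (Fin K × Fin L),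
      ∀ r, score (e r) = offset U r.1 + score r.2.1 := by
  have hlt : ∀ r : (Σ i : Fin n, {d : Fin K × Fin L // d ∈ U i}),
      score r.2.1 < (U r.1).card := fun r => ((hord r.1).mem_iff _).1 r.2.2
  have hex : ∀ r : (Σ i : Fin n, {d : Fin K × Fin L // d ∈ U i}),
      ∃ c : Fin K × Fin L, score c = offset U r.1 + score r.2.1 := by
    intro r
    apply exists_score_eq
    have h1 := offset_add_card_le_sum U r.1
    have h2 := hlt r
    omega
  choose f hf using hex
  have hinj : Function.Injective f := by
    intro r r' h
    have h1 : offset U r.1 + score r.2.1 = offset U r'.1 + score r'.2.1 := by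
      rw [← hf, ← hf, h]
    have h2 := hlt r
    have h3 := hlt r'
    rcases lt_trichotomy r.1 r'.1 with hlt' | heq | hgt
    · have := offset_add_card_le U hlt'
      omega
    · obtain ⟨i, d, hd⟩ := r
      obtain ⟨i', d', hd'⟩ := r'
      obtain rfl : i = i' := heq
      obtain rfl : d = d' := score_injective (Nat.add_left_cancel h1)
      rfl
    · have := offset_add_card_le U hgt
      omega
  have hbij : Function.Bijective f := by
    refine (Fintype.bijective_iff_injective_and_card f).2 ⟨hinj, ?_⟩
    simp [Fintype.card_sigma, hsum]
  exact ⟨Equiv.ofBijective f hbij, hf⟩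

/-! ### Nonvanishing of the determinant at some configuration -/

lemma hEntry_eq (dx dy k l : ℕ) (x y : ℝ) : hEntry dx dy k l x y =
    (k.descFactorial dx : ℝ) * (l.descFactorial dy : ℝ) * x ^ (k - dx) * y ^ (l - dy) := by
  unfold hEntry
  split_ifs with h
  · rfl
  · rcases not_and_or.1 h with h | h
    · simp [Nat.descFactorial_eq_zero_iff_lt.2 (not_le.1 h)]
    · simp [Nat.descFactorial_eq_zero_iff_lt.2 (not_le.1 h)]

/-- The entries on the curve `(t ^ i, t ^ (i * K))`, multiplied by a power of `t` depending only on
the row, are monomials in `t` whose degree is `i` times the score of the column. -/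
lemma hEntry_curve (K i dx dy k l : ℕ) (t : ℝ) :
    t ^ (i * (K * dy + dx)) * hEntry dx dy k l (t ^ i) (t ^ (i * K)) =
      (k.descFactorial dx : ℝ) * (l.descFactorial dy : ℝ) * t ^ (i * (K * l + k)) := by
  unfold hEntry
  split_ifs with h
  · obtain ⟨a, rfl⟩ := Nat.exists_eq_add_of_le h.1
    obtain ⟨b, rfl⟩ := Nat.exists_eq_add_of_le h.2
    simp only [Nat.add_sub_cancel_left]
    ring
  · rcases not_and_or.1 h with h | h
    · simp [Nat.descFactorial_eq_zero_iff_lt.2 (not_le.1 h)]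
    · simp [Nat.descFactorial_eq_zero_iff_lt.2 (not_le.1 h)]

/-- The top coefficient of the determinant along the curve is nonzero: its left kernel splits over
the workers and is trivial on each block. -/
lemma det_block_ne_zero {K L n : ℕ} (hK : 0 < K) (U : Fin n → Finset (Fin K × Fin L))
    (hord : ∀ i, HorizontallyOrdered K L (U i))
    (e : (Σ i : Fin n, {d : Fin K × Fin L // d ∈ U i}) ≃ (Fin K × Fin L))
    (he : ∀ r, score (e r) = offset U r.1 + score r.2.1) :
    Matrix.det (Matrix.of fun r c : Fin K × Fin L =>
      if ((e.symm r).1 : ℕ) = ((e.symm c).1 : ℕ) then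
        ((c.1 : ℕ).descFactorial (e.symm r).2.1.1 : ℝ) *
          ((c.2 : ℕ).descFactorial (e.symm r).2.1.2 : ℝ)
      else 0) ≠ 0 := by
  classical
  intro hdet
  obtain ⟨u, hu, hu0⟩ := Matrix.exists_vecMul_eq_zero_iff.2 hdet
  apply hu
  suffices h : ∀ i, ∀ d : {d : Fin K × Fin L // d ∈ U i}, u (e ⟨i, d⟩) = 0 by
    funext r
    have := h (e.symm r).1 (e.symm r).2
    simpa using this
  intro i
  have hcol : ∀ c : Fin K × Fin L, (e.symm c).1 = i →
      ∑ d : {d : Fin K × Fin L // d ∈ U i}, u (e ⟨i, d⟩) *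
        (((c.1 : ℕ).descFactorial d.1.1 : ℝ) * ((c.2 : ℕ).descFactorial d.1.2 : ℝ)) = 0 := by
    intro c hc
    have h1 := congrFun hu0 c
    simp only [Matrix.vecMul, dotProduct, Matrix.of_apply, Pi.zero_apply] at h1
    rw [← Equiv.sum_comp e, Fintype.sum_sigma, Finset.sum_eq_single i] at h1
    · refine (Finset.sum_congr rfl fun d _ => ?_).trans h1
      rw [e.symm_apply_apply, if_pos (by rw [hc])]
    · intro j _ hj
      refine Finset.sum_eq_zero fun d _ => ?_
      have : ¬ ((j : ℕ) = i) := fun h => hj (Fin.ext h)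
      simp [hc, this]
    · intro h
      exact absurd (Finset.mem_univ i) h
  -- the coefficients, extended by zero to all pairs of naturals
  let w : Fin K × Fin L → ℝ := fun d => if h : d ∈ U i then u (e ⟨i, ⟨d, h⟩⟩) else 0
  let v : ℕ → ℕ → ℝ := fun a b =>
    if h : a < K ∧ b < L then w (⟨a, h.1⟩, ⟨b, h.2⟩) else 0
  have hvw : ∀ d : Fin K × Fin L, v d.1 d.2 = w d := by
    intro d
    simp [v]
  have hvz := block_unisolvent K L (U i).card (offset U i) hK
    (by simpa [Fintype.card_prod] using Finset.card_le_univ (U i)) v ?_ ?_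
  · intro d
    have h1 := hvz d.1.1 d.1.1.2 d.1.2
    rw [hvw] at h1
    simpa [w, d.2] using h1
  · intro a b hab
    by_cases h : a < K ∧ b < L
    · have : (⟨⟨a, h.1⟩, ⟨b, h.2⟩⟩ : Fin K × Fin L) ∉ U i := by
        rw [(hord i).mem_iff]
        exact not_lt.2 hab
      simp [v, h, w, this]
    · simp [v, h]
  · intro k hk l h1 h2
    obtain ⟨d, hd⟩ : ∃ d : {d : Fin K × Fin L // d ∈ U i},
        score d.1 = K * l + k - offset U i := by
      have hle := Finset.card_le_univ (U i)
      simp only [Fintype.card_prod, Fintype.card_fin] at hle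
      obtain ⟨d, hd⟩ := exists_score_eq (K := K) (L := L) (t := K * l + k - offset U i) (by omega)
      exact ⟨⟨d, ((hord i).mem_iff d).2 (by omega)⟩, hd⟩
    have hs : score (e ⟨i, d⟩) = K * l + k := by
      rw [he]
      simp only [hd]
      omega
    have hlL : l < L := by
      have h3 := score_lt (e ⟨i, d⟩)
      rw [hs] at h3
      by_contra! h4
      have := Nat.mul_le_mul_left K h4
      omega
    have hc : e ⟨i, d⟩ = (⟨k, hk⟩, ⟨l, hlL⟩) := score_injective hs
    have h3 := hcol (⟨k, hk⟩, ⟨l, hlL⟩) (by rw [← hc]; simp)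
    rw [← h3]
    simp only [Finset.sum_mul]
    have h4 : ∑ d : {d : Fin K × Fin L // d ∈ U i}, u (e ⟨i, d⟩) *
        ((k.descFactorial d.1.1 : ℝ) * (l.descFactorial d.1.2 : ℝ)) =
        ∑ d : Fin K × Fin L, v d.1 d.2 *
          ((k.descFactorial d.1 : ℝ) * (l.descFactorial d.2 : ℝ)) := by
      rw [← Finset.sum_subset (Finset.subset_univ (U i)), ← Finset.sum_coe_sort (U i)]
      · refine Finset.sum_congr rfl fun d _ => ?_
        rw [hvw]
        simp [w, d.2]
      · intro d _ hd
        rw [hvw]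
        simp [w, hd]
    rw [h4, Fintype.sum_prod_type_right,
      Finset.sum_range (fun b => ∑ a ∈ Finset.range K,
        v a b * (k.descFactorial a : ℝ) * (l.descFactorial b : ℝ))]
    refine Finset.sum_congr rfl fun b _ => ?_
    rw [Finset.sum_range (fun a => v a b * (k.descFactorial a : ℝ) * (l.descFactorial b : ℝ))]
    exact Finset.sum_congr rfl fun a _ => mul_assoc _ _ _

lemma exists_det_ne_zero {K L n : ℕ} (hK : 0 < K) (U : Fin n → Finset (Fin K × Fin L))
    (hord : ∀ i, HorizontallyOrdered K L (U i))
    (e : (Σ i : Fin n, {d : Fin K × Fin L // d ∈ U i}) ≃ (Fin K × Fin L))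
    (he : ∀ r, score (e r) = offset U r.1 + score r.2.1) :
    ∃ z : Fin n → ℝ × ℝ, (interpMatrix K L n U e z).det ≠ 0 := by
  have hmono : Monovary (fun r => ((e.symm r).1 : ℕ)) (score : Fin K × Fin L → ℕ) := by
    intro a b hab
    by_contra! hlt
    have h1 := offset_add_card_le U (Fin.lt_def.2 hlt)
    have h2 := ((hord (e.symm b).1).mem_iff _).1 (e.symm b).2.2
    have h3 := he (e.symm a)
    have h4 := he (e.symm b)
    rw [Equiv.apply_symm_apply] at h3 h4
    omega
  have hcoeff := coeff_det_eq_det_block (fun r => ((e.symm r).1 : ℕ))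
    (score : Fin K × Fin L → ℕ) score_injective hmono
    (fun r c => ((c.1 : ℕ).descFactorial (e.symm r).2.1.1 : ℝ) *
          ((c.2 : ℕ).descFactorial (e.symm r).2.1.2 : ℝ))
  set P := Matrix.det (Matrix.of fun r c : Fin K × Fin L =>
    Polynomial.C (((c.1 : ℕ).descFactorial (e.symm r).2.1.1 : ℝ) *
      ((c.2 : ℕ).descFactorial (e.symm r).2.1.2 : ℝ)) *
      Polynomial.X ^ (((e.symm r).1 : ℕ) * score c)) with hP
  have hP0 : P ≠ 0 := by
    intro h
    rw [h, Polynomial.coeff_zero] at hcoeff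
    exact det_block_ne_zero hK U hord e he hcoeff.symm
  obtain ⟨t, ht⟩ : ∃ t : ℝ, P.eval t ≠ 0 := by
    by_contra! h
    exact hP0 (Polynomial.funext (by simpa using h))
  refine ⟨fun i => (t ^ (i : ℕ), t ^ ((i : ℕ) * K)), fun hdet => ht ?_⟩
  have h1 := Matrix.det_mul_column (fun r : Fin K × Fin L =>
    t ^ (((e.symm r).1 : ℕ) * score (e.symm r).2.1))
    (interpMatrix K L n U e fun i => (t ^ (i : ℕ), t ^ ((i : ℕ) * K)))
  rw [hdet, mul_zero] at h1
  rw [← h1, hP, ← Polynomial.coe_evalRingHom, RingHom.map_det]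
  congr 1
  ext r c
  simp [interpMatrix, score, hEntry_curve]

/-- **Corollary 1 (BPC-HO).**  If the derivative sets of the `n` workers are horizontally ordered
and contain `KL` orders in total, then the corresponding `KL × KL` interpolation matrix is
nonsingular for almost all choices of the evaluation points: any `KL` computations received by
the master under the horizontal computation order suffice for decoding almost surely. -/
theorem bpc_ho_recovery
    (K L n : ℕ) (hK : 0 < K) (hL : 0 < L)
    (U : Fin n → Finset (Fin K × Fin L))
    (hord : ∀ i, HorizontallyOrdered K L (U i))
    (hsum : ∑ i, (U i).card = K * L) :
    ∃ e : (Σ i : Fin n, {d : Fin K × Fin L // d ∈ U i}) ≃ (Fin K × Fin L),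
      volume {z : Fin n → ℝ × ℝ | (interpMatrix K L n U e z).det = 0} = 0 := by
  obtain ⟨e, he⟩ := exists_row_equiv U hord hsum
  refine ⟨e, ?_⟩
  obtain ⟨z₀, hz₀⟩ := exists_det_ne_zero hK U hord e he
  refine null_of_polynomial_on_lines volume (fun z => (interpMatrix K L n U e z).det) ?_ ?_ z₀ hz₀
  · refine Continuous.matrix_det (continuous_matrix fun r c => ?_)
    simp only [interpMatrix, Matrix.of_apply, hEntry_eq]
    fun_prop
  · intro a v
    refine ⟨Matrix.det (Matrix.of fun r c : Fin K × Fin L =>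
      Polynomial.C (((c.1 : ℕ).descFactorial (e.symm r).2.1.1 : ℝ) *
        ((c.2 : ℕ).descFactorial (e.symm r).2.1.2 : ℝ)) *
      (Polynomial.C (a (e.symm r).1).1 + Polynomial.X * Polynomial.C (v (e.symm r).1).1) ^
        ((c.1 : ℕ) - (e.symm r).2.1.1) *
      (Polynomial.C (a (e.symm r).1).2 + Polynomial.X * Polynomial.C (v (e.symm r).1).2) ^
        ((c.2 : ℕ) - (e.symm r).2.1.2)), fun t => ?_⟩
    rw [← Polynomial.coe_evalRingHom, RingHom.map_det]
    congr 1
    ext r c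
    simp [interpMatrix, hEntry_eq, mul_comm t]
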